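/- Let K = 𝔽_q(X) be the field of rational functions over 𝔽_q and let F = 𝔽_q(X^p − X) ⊆ K be the subfield generated over 𝔽_q by X^p − X. Then K/F is a Galois extension of degree p, and the map ℤ/pℤ → Gal(K/F) sending n to the 𝔽_q-automorphism of K determined by X ↦ X − n (with n viewed in 𝔽_p ⊆ 𝔽_q) is an isomorphism of groups. -/

import Mathlib

open Polynomial

/-!
Translations `X ↦ X - a` make the additive group of `F` act on `F(X)` by `F`-automorphisms. If a
finite group `A` of translations leaves a polynomial `P` of degree `|A|` invariant, then `A` embeds
in the automorphism group of `F(X)` over `F(P)`, which has at most `[F(X) : F(P)] = deg P = |A|`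
elements; so the extension is Galois with group `A`. For a finite subfield `k` of `F` with `q`
elements, `X ^ q - X` is invariant under translations by `k`, because the `q`-power map is
`k`-linear.
-/

section Galois

variable {K L G : Type*} [Field K] [Field L] [Algebra K L]

theorem isGalois_and_bijective_of_finrank_eq_card [Finite G] [Nonempty G] {f : G → Gal(L/K)}
    (hf : Function.Injective f) (hG : Module.finrank K L = Nat.card G) :
    IsGalois K L ∧ Function.Bijective f := by
  have : FiniteDimensional K L := .of_finrank_pos (hG ▸ Nat.card_pos)
  have hcard : Nat.card Gal(L/K) ≤ Nat.card G := by
    rw [← hG, Nat.card_eq_fintype_card]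
    exact AlgEquiv.card_le
  have hbij : Function.Bijective f := hf.bijective_of_nat_card_le hcard
  exact ⟨.of_card_aut_eq_finrank _ _ (by rw [hG, Nat.card_congr (Equiv.ofBijective f hbij)]), hbij⟩

theorem isGalois_and_exists_mulEquiv_of_mem_fixingSubgroup [Group G] [Finite G]
    {E : IntermediateField K L} {f : G →* Gal(L/K)} (hf : Function.Injective f)
    (hE : ∀ g, f g ∈ E.fixingSubgroup) (hG : Module.finrank E L = Nat.card G) :
    IsGalois E L ∧ ∃ φ : G ≃* Gal(L/E), ∀ g x, φ g x = f g x := by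
  let f' : G →* Gal(L/E) := E.fixingSubgroupEquiv.toMonoidHom.comp (f.codRestrict _ hE)
  have hf' : Function.Injective f' :=
    E.fixingSubgroupEquiv.injective.comp fun _ _ h ↦ hf (congrArg Subtype.val h)
  obtain ⟨hgal, hbij⟩ := isGalois_and_bijective_of_finrank_eq_card hf' hG
  exact ⟨hgal, .ofBijective f' hbij, fun _ _ ↦ rfl⟩

end Galois

open scoped IntermediateField

section Translation

variable {F : Type*} [Field F]

/-- The action of the additive group of `F` on the rational function field `F(X)` by translations:
`a` acts as the `F`-automorphism `X ↦ X - a`. -/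
noncomputable def ratFuncTranslation : Multiplicative F →* Gal(RatFunc F/F) :=
  (IsFractionRing.fieldEquivOfAlgEquivHom F (RatFunc F)).comp
    { toFun a := taylorEquiv (-a.toAdd)
      map_one' := AlgEquiv.ext fun P ↦ by
        change taylor (-0) P = P
        rw [neg_zero, taylor_zero]
      map_mul' a b := AlgEquiv.ext fun P ↦ by
        change taylor (-(a.toAdd + b.toAdd)) P = taylor (-a.toAdd) (taylor (-b.toAdd) P)
        rw [taylor_taylor, neg_add] }

theorem ratFuncTranslation_algebraMap (a : F) (P : F[X]) :
    ratFuncTranslation (.ofAdd a) (algebraMap F[X] (RatFunc F) P) =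
      algebraMap F[X] (RatFunc F) (taylor (-a) P) :=
  IsFractionRing.fieldEquivOfAlgEquiv_algebraMap F (RatFunc F) (RatFunc F) (taylorEquiv (-a)) P

theorem ratFuncTranslation_X (a : F) :
    ratFuncTranslation (.ofAdd a) RatFunc.X = RatFunc.X - algebraMap F (RatFunc F) a := by
  rw [← RatFunc.algebraMap_X, ratFuncTranslation_algebraMap]
  simp [sub_eq_add_neg]

theorem ratFuncTranslation_injective :
    Function.Injective (ratFuncTranslation : Multiplicative F →* Gal(RatFunc F/F)) := by
  intro a b hab
  have hX := DFunLike.congr_fun hab RatFunc.X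
  rw [← ofAdd_toAdd a, ← ofAdd_toAdd b, ratFuncTranslation_X, ratFuncTranslation_X] at hX
  exact Multiplicative.toAdd.injective
    ((algebraMap F (RatFunc F)).injective (sub_right_injective hX))

theorem ratFuncTranslation_mem_fixingSubgroup_adjoin {a : F} {P : F[X]} (h : taylor (-a) P = P) :
    ratFuncTranslation (.ofAdd a) ∈ F⟮algebraMap F[X] (RatFunc F) P⟯.fixingSubgroup := by
  rw [IntermediateField.mem_fixingSubgroup_iff]
  refine (IntermediateField.forall_mem_adjoin_smul_eq_self_iff F
    (ratFuncTranslation (.ofAdd a))).mpr fun x hx ↦ ?_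
  rw [Set.mem_singleton_iff.mp hx, AlgEquiv.smul_def, ratFuncTranslation_algebraMap, h]

theorem finrank_adjoin_algebraMap_polynomial (P : F[X]) :
    Module.finrank F⟮algebraMap F[X] (RatFunc F) P⟯ (RatFunc F) = P.natDegree := by
  rw [RatFunc.finrank_eq_max_natDegree, RatFunc.num_algebraMap, RatFunc.denom_algebraMap,
    natDegree_one, max_eq_left (Nat.zero_le _)]

theorem isGalois_adjoin_of_taylor_eq {A : Type*} [AddGroup A] [Finite A] {ι : A →+ F}
    (hι : Function.Injective ι) {P : F[X]} (hP : ∀ a, taylor (ι a) P = P)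
    (hdeg : P.natDegree = Nat.card A) :
    IsGalois F⟮algebraMap F[X] (RatFunc F) P⟯ (RatFunc F) ∧
      ∃ φ : Multiplicative A ≃* Gal(RatFunc F/F⟮algebraMap F[X] (RatFunc F) P⟯),
        ∀ a, φ (.ofAdd a) RatFunc.X = RatFunc.X - algebraMap F (RatFunc F) (ι a) := by
  obtain ⟨hgal, φ, hφ⟩ := isGalois_and_exists_mulEquiv_of_mem_fixingSubgroup
    (f := ratFuncTranslation.comp ι.toMultiplicative)
    (ratFuncTranslation_injective.comp hι)
    (fun a ↦ ratFuncTranslation_mem_fixingSubgroup_adjoin (a := ι a.toAdd)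
      (by simpa using hP (-a.toAdd)))
    ((finrank_adjoin_algebraMap_polynomial P).trans hdeg)
  exact ⟨hgal, φ, fun a ↦ (hφ _ _).trans (ratFuncTranslation_X _)⟩

end Translation

section FiniteField

variable (k : Type*) [Field k] [Finite k]

theorem taylor_algebraMap_X_pow_card_sub_X (R : Type*) [CommRing R] [Algebra k R] (a : k) :
    taylor (algebraMap k R a) (X ^ Nat.card k - X) = X ^ Nat.card k - X := by
  have := Fintype.ofFinite k
  have h : (X + C (algebraMap k R a)) ^ Nat.card k = X ^ Nat.card k + C (algebraMap k R a) := by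
    have hadd := map_add (FiniteField.frobeniusAlgHom k R[X]) X (algebraMap k R[X] a)
    rwa [AlgHom.commutes, FiniteField.coe_frobeniusAlgHom, ← Nat.card_eq_fintype_card] at hadd
  rw [map_sub, taylor_X_pow, taylor_X, h]
  ring

theorem stmt_12_general (F : Type*) [Field F] [Algebra k F] :
    IsGalois F⟮(RatFunc.X ^ Nat.card k - RatFunc.X : RatFunc F)⟯ (RatFunc F) ∧
    Module.finrank F⟮(RatFunc.X ^ Nat.card k - RatFunc.X : RatFunc F)⟯ (RatFunc F) = Nat.card k ∧
    ∃ φ : Multiplicative k ≃*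
        Gal(RatFunc F/F⟮(RatFunc.X ^ Nat.card k - RatFunc.X : RatFunc F)⟯),
      ∀ a : k, φ (.ofAdd a) RatFunc.X =
        RatFunc.X - algebraMap F (RatFunc F) (algebraMap k F a) := by
  have hdeg : (X ^ Nat.card k - X : F[X]).natDegree = Nat.card k :=
    FiniteField.X_pow_card_sub_X_natDegree_eq F Finite.one_lt_card
  have hX : (RatFunc.X ^ Nat.card k - RatFunc.X : RatFunc F) =
      algebraMap F[X] (RatFunc F) (X ^ Nat.card k - X) := by simp
  rw [hX]
  obtain ⟨hgal, hφ⟩ := isGalois_adjoin_of_taylor_eq (ι := (algebraMap k F).toAddMonoidHom)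
    (algebraMap k F).injective (taylor_algebraMap_X_pow_card_sub_X k F) hdeg
  exact ⟨hgal, (finrank_adjoin_algebraMap_polynomial _).trans hdeg, hφ⟩

end FiniteField

/-- Let `K = 𝔽_q(X)` and let `E = 𝔽_q(X^p − X) ⊆ K` be the subfield generated over `𝔽_q` by
`X^p − X`. Then `K/E` is Galois of degree `p`, and `n ↦ (X ↦ X − n)` is a group isomorphism
`ℤ/pℤ ≃ Gal(K/E)` (an automorphism in `Gal(K/E)` fixes `𝔽_q ⊆ E` and is determined by the
image of `X`). -/
theorem stmt_12 (p s : ℕ) [Fact p.Prime] (F : Type) [Field F] [Fintype F]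
    [Algebra (ZMod p) F] (hq : Fintype.card F = p ^ s)
    (E : IntermediateField F (RatFunc F))
    (hE : E = IntermediateField.adjoin F {(RatFunc.X ^ p - RatFunc.X : RatFunc F)}) :
    IsGalois E (RatFunc F) ∧ Module.finrank E (RatFunc F) = p ∧
    ∃ φ : Multiplicative (ZMod p) ≃* (RatFunc F ≃ₐ[E] RatFunc F),
      ∀ n : ZMod p,
        (φ (Multiplicative.ofAdd n)) RatFunc.X =
          RatFunc.X - algebraMap F (RatFunc F) (algebraMap (ZMod p) F n) := by
  subst hE
  have h := stmt_12_general (ZMod p) F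
  rwa [Nat.card_zmod] at h
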